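/- Let x = (x_1,…,x_n) ∈ ℝⁿ satisfy the different-subset-sum property: Σ_{i∈I} x_i ≠ Σ_{i∈J} x_i for all distinct subsets I ≠ J of [n]. Let π be a uniformly random permutation of [n] and W = x^π, so that W is uniform on 𝒫. Fix deterministic permutations σ_k of [k] for each k ∈ {0,…,n}, and define φ(W) = φ_{σ_k}(W) on the event that W has exactly k complete excursions below its running maximum, where φ_{σ_k} rearranges the k increment blocks of the path over its excursion intervals in the order σ_k(1),…,σ_k(k) (leaving the increments after the last element of 𝒵 in place). Then φ(W) has the same distribution as W. -/

import Mathlib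

open MeasureTheory Set Filter Classical
open scoped ENNReal

noncomputable section

/-- The path `x^σ`: `w_0 = 0`, `w_j = Σ_{i ≤ j} x_{σ(i)}`. -/
def pathOf (n : ℕ) (x : Fin n → ℝ) (σ : Equiv.Perm (Fin n)) : ℕ → ℝ :=
  fun j => ∑ i ∈ Finset.univ.filter (fun i : Fin n => (i : ℕ) < j), x (σ i)

/-- The set `𝒵 = {j ∈ {0,…,n} : w_j = max_{i ≤ j} w_i}` of times at which the path
is at its running maximum. -/
def ladderSet (n : ℕ) (w : ℕ → ℝ) : Finset ℕ :=
  (Finset.range (n + 1)).filter (fun j => ∀ i ∈ Finset.range (j + 1), w i ≤ w j)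

/-- The number `K` of complete excursions below the maximum:
`𝒵 = {I_0 < I_1 < ⋯ < I_K}` has `K + 1` elements. -/
def numExc (n : ℕ) (w : ℕ → ℝ) : ℕ := (ladderSet n w).card - 1

/-- `I_m`, the `m`-th element of `𝒵` in increasing order (junk value `0` if out of range). -/
def ladderIdx (n : ℕ) (w : ℕ → ℝ) (m : ℕ) : ℕ :=
  ((ladderSet n w).sort (· ≤ ·)).getD m 0

/-- Length of the block placed in `r`-th position (0-based) after rearranging the `k`
excursion blocks by `σ`: the `r`-th new block is the old block `σ(r)`, which covers
positions `I_{σ(r)} + 1, …, I_{σ(r)+1}`. -/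
def blockLen (n : ℕ) (w : ℕ → ℝ) (k : ℕ) (σ : Equiv.Perm (Fin k)) (r : ℕ) : ℕ :=
  if h : r < k then
    ladderIdx n w (((σ ⟨r, h⟩ : Fin k) : ℕ) + 1) - ladderIdx n w ((σ ⟨r, h⟩ : Fin k) : ℕ)
  else 0

/-- `J_m`, the right endpoint of the `m`-th new block. -/
def newEnd (n : ℕ) (w : ℕ → ℝ) (k : ℕ) (σ : Equiv.Perm (Fin k)) (m : ℕ) : ℕ :=
  ∑ r ∈ Finset.range m, blockLen n w k σ r

/-- Position in the original path from which the increment at position `p` of the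
rearranged path is taken: positions in the `m`-th new block `(J_m, J_{m+1}]` are read
from the old block `σ(m)`, i.e. from `(I_{σ(m)}, I_{σ(m)+1}]`; increments after the
last ladder time are left in place. -/
def excSource (n : ℕ) (w : ℕ → ℝ) (k : ℕ) (σ : Equiv.Perm (Fin k)) (p : ℕ) : ℕ :=
  if 1 ≤ p ∧ p ≤ newEnd n w k σ k then
    let m := sInf {m : ℕ | p ≤ newEnd n w k σ (m + 1)}
    if h : m < k then ladderIdx n w ((σ ⟨m, h⟩ : Fin k) : ℕ) + (p - newEnd n w k σ m)
    else p
  else p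

/-- `φ_σ(w)`: the path whose increments are those of `w`, with the `k` complete
excursion blocks below the maximum rearranged in the order `σ(0), …, σ(k−1)` and the
increments after the last ladder time left in place. -/
def permuteExc (n : ℕ) (k : ℕ) (σ : Equiv.Perm (Fin k)) (w : ℕ → ℝ) : ℕ → ℝ :=
  fun j => ∑ p ∈ Finset.Icc 1 j,
    (w (excSource n w k σ p) - w (excSource n w k σ p - 1))

/-!
The rearrangement `φ` lifts to the map `τ ↦ τ * e` on permutations, where `e` lists the increments
of `x^τ` in their new order. Each block ends at a new running maximum and otherwise stays strictly
below its starting level, so rearranging the blocks yields a path whose ladder times are exactly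
the endpoints of the rearranged blocks. Hence the blocks can be read off the rearranged path, and
rearranging them by `σ⁻¹` undoes `σ`; in particular the lift of `φ` is a bijection of the symmetric
group, and bijections preserve the uniform law.
-/

theorem exists_mem_Ioc_of_monotone {α : Type*} [LinearOrder α] {f : ℕ → α} (hf : Monotone f)
    {k : ℕ} {p : α} (hp : p ∈ Set.Ioc (f 0) (f k)) :
    ∃ m : Fin k, p ∈ Set.Ioc (f m) (f (m + 1)) := by
  rw [← hf.biUnion_Ico_Ioc_map_succ 0 k] at hp
  simp only [Set.mem_iUnion, Set.mem_Ico] at hp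
  obtain ⟨m, hm, hp⟩ := hp
  exact ⟨⟨m, hm.2⟩, hp⟩

section Ladder

variable {n k : ℕ} {w : ℕ → ℝ}

theorem mem_ladderSet {j : ℕ} : j ∈ ladderSet n w ↔ j ≤ n ∧ ∀ i ≤ j, w i ≤ w j := by
  simp only [ladderSet, Finset.mem_filter, Finset.mem_range, Nat.lt_succ_iff]

theorem zero_mem_ladderSet : 0 ∈ ladderSet n w := by
  simp [mem_ladderSet]

theorem card_ladderSet : (ladderSet n w).card = numExc n w + 1 :=
  (Nat.sub_add_cancel (Finset.card_pos.mpr ⟨0, zero_mem_ladderSet⟩)).symm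

theorem finite_setOf_mem_ladderSet : (Set.ofPred (· ∈ ladderSet n w)).Finite :=
  (ladderSet n w).finite_toSet

theorem card_toFinset_ladderSet :
    (finite_setOf_mem_ladderSet (n := n) (w := w)).toFinset.card = numExc n w + 1 := by
  rw [← card_ladderSet]
  congr 1
  ext
  simp

theorem ladderIdx_eq_nth (m : ℕ) : ladderIdx n w m = Nat.nth (· ∈ ladderSet n w) m := by
  rw [Nat.nth_eq_getD_sort finite_setOf_mem_ladderSet, ladderIdx]
  congr 2
  ext
  simp

theorem ladderIdx_zero : ladderIdx n w 0 = 0 := by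
  rw [ladderIdx_eq_nth, Nat.nth_zero_of_zero zero_mem_ladderSet]

theorem strictMonoOn_ladderIdx : StrictMonoOn (ladderIdx n w) (Set.Iic (numExc n w)) := by
  have h := Nat.nth_strictMonoOn (finite_setOf_mem_ladderSet (n := n) (w := w))
  rw [card_toFinset_ladderSet] at h
  simpa only [funext ladderIdx_eq_nth, Set.Iio_add_one_eq_Iic] using h

theorem ladderIdx_mem_ladderSet {m : ℕ} (hm : m ≤ numExc n w) :
    ladderIdx n w m ∈ ladderSet n w := by
  rw [ladderIdx_eq_nth]
  exact Nat.nth_mem_of_lt_card finite_setOf_mem_ladderSet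
    (card_toFinset_ladderSet ▸ Nat.lt_succ_of_le hm)

theorem le_ladderIdx_numExc {j : ℕ} (hj : j ∈ ladderSet n w) :
    j ≤ ladderIdx n w (numExc n w) := by
  obtain ⟨m, hm, rfl⟩ := Nat.exists_lt_card_finite_nth_eq finite_setOf_mem_ladderSet hj
  rw [card_toFinset_ladderSet, Nat.lt_succ_iff] at hm
  rw [← ladderIdx_eq_nth]
  exact strictMonoOn_ladderIdx.monotoneOn hm Set.self_mem_Iic hm

theorem ladderIdx_lt_ladderIdx_succ (hk : numExc n w = k) (m : Fin k) :
    ladderIdx n w m < ladderIdx n w (m + 1) :=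
  strictMonoOn_ladderIdx (by simp only [Set.mem_Iic]; omega) (by simp only [Set.mem_Iic]; omega)
    (Nat.lt_succ_self m)

theorem ladderIdx_le {m : ℕ} (hm : m ≤ numExc n w) : ladderIdx n w m ≤ n :=
  (mem_ladderSet.mp (ladderIdx_mem_ladderSet hm)).1

theorem apply_le_apply_ladderIdx {m i : ℕ} (hm : m ≤ numExc n w) (hi : i ≤ ladderIdx n w m) :
    w i ≤ w (ladderIdx n w m) :=
  (mem_ladderSet.mp (ladderIdx_mem_ladderSet hm)).2 i hi

theorem apply_lt_of_forall_notMem_ladderSet {a j : ℕ} (ha : a ∈ ladderSet n w) (haj : a < j)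
    (hj : j ≤ n) (hno : ∀ i ∈ Set.Ioc a j, i ∉ ladderSet n w) : w j < w a := by
  induction j using Nat.strong_induction_on with
  | _ j ih =>
    by_contra! hle
    refine hno j ⟨haj, le_rfl⟩ (mem_ladderSet.mpr ⟨hj, fun i hij => ?_⟩)
    rcases le_or_gt i a with hia | hai
    · exact ((mem_ladderSet.mp ha).2 i hia).trans hle
    · rcases hij.eq_or_lt with rfl | hij
      · exact le_rfl
      · exact (ih i hij hai (by omega) fun l hl => hno l ⟨hl.1, hl.2.trans hij.le⟩).le.trans hle

theorem apply_lt_apply_ladderIdx (hk : numExc n w = k) (m : Fin k) {j : ℕ}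
    (hj : j ∈ Set.Ioo (ladderIdx n w m) (ladderIdx n w (m + 1))) :
    w j < w (ladderIdx n w m) := by
  have hn : ladderIdx n w (m + 1) ≤ n := ladderIdx_le (by omega)
  refine apply_lt_of_forall_notMem_ladderSet (ladderIdx_mem_ladderSet (by omega)) hj.1
    (hj.2.le.trans hn) fun i hi hmem => ?_
  have hlt : i < ladderIdx n w (m + 1) := hi.2.trans_lt hj.2
  rw [ladderIdx_eq_nth] at hlt
  have hle := Nat.le_nth_of_lt_nth_succ hlt hmem
  rw [← ladderIdx_eq_nth] at hle
  exact hle.not_gt hi.1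

theorem apply_lt_apply_ladderIdx_numExc {j : ℕ}
    (hj : j ∈ Set.Ioc (ladderIdx n w (numExc n w)) n) :
    w j < w (ladderIdx n w (numExc n w)) :=
  apply_lt_of_forall_notMem_ladderSet (ladderIdx_mem_ladderSet le_rfl) hj.1 hj.2
    fun _ hi hmem => (le_ladderIdx_numExc hmem).not_gt hi.1

theorem ladderSet_eq_image {f : ℕ → ℕ} (hf : Monotone f) (hf₀ : f 0 = 0) (hfn : f k ≤ n)
    (hle : ∀ m : Fin k, ∀ i ∈ Set.Icc (f m) (f (m + 1)), w i ≤ w (f (m + 1)))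
    (hlt : ∀ m : Fin k, ∀ i ∈ Set.Ioo (f m) (f (m + 1)), w i < w (f m))
    (htail : ∀ i ∈ Set.Ioc (f k) n, w i < w (f k)) :
    ladderSet n w = (Finset.range (k + 1)).image f := by
  have running_max : ∀ m ≤ k, ∀ i ≤ f m, w i ≤ w (f m) := by
    intro m
    induction m with
    | zero => intro _ i hi; rw [hf₀, Nat.le_zero] at hi; rw [hi, hf₀]
    | succ m ih =>
      intro hm i hi
      rcases le_or_gt i (f m) with him | hmi
      · exact (ih (by omega) i him).trans (hle ⟨m, hm⟩ _ ⟨le_rfl, hf m.le_succ⟩)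
      · exact hle ⟨m, hm⟩ i ⟨hmi.le, hi⟩
  ext j
  simp only [Finset.mem_image, Finset.mem_range, Nat.lt_succ_iff]
  constructor
  · intro hj
    obtain ⟨hjn, hmax⟩ := mem_ladderSet.mp hj
    have hjk : j ≤ f k := by
      by_contra! h
      exact (htail j ⟨h, hjn⟩).not_ge (hmax _ h.le)
    rcases Nat.eq_zero_or_pos j with rfl | hj₀
    · exact ⟨0, Nat.zero_le k, hf₀⟩
    · obtain ⟨m, hm⟩ := exists_mem_Ioc_of_monotone hf ⟨hf₀.trans_lt hj₀, hjk⟩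
      rcases hm.2.eq_or_lt with h | h
      · exact ⟨m + 1, m.isLt, h.symm⟩
      · exact absurd (hmax _ hm.1.le) (hlt m j ⟨hm.1, h⟩).not_ge
  · rintro ⟨m, hm, rfl⟩
    exact mem_ladderSet.mpr ⟨(hf hm).trans hfn, running_max m hm⟩

theorem numExc_eq_of_ladderSet_eq_image {f : ℕ → ℕ} (hf : StrictMonoOn f (Set.Iic k))
    (h : ladderSet n w = (Finset.range (k + 1)).image f) : numExc n w = k := by
  have hinj : Set.InjOn f (Finset.range (k + 1)) := by
    simpa [Set.Iio_add_one_eq_Iic] using hf.injOn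
  rw [numExc, h, Finset.card_image_of_injOn hinj, Finset.card_range, Nat.add_sub_cancel]

theorem ladderIdx_eq_of_ladderSet_eq_image {f : ℕ → ℕ} (hf : StrictMonoOn f (Set.Iic k))
    (h : ladderSet n w = (Finset.range (k + 1)).image f) {m : ℕ} (hm : m ≤ k) :
    ladderIdx n w m = f m := by
  have hdom : {m | ∀ hfin : (Set.ofPred (· ∈ ladderSet n w)).Finite, m < hfin.toFinset.card} =
      Set.Iic k := by
    ext m
    simp only [Set.mem_ofPred_eq, card_toFinset_ladderSet, numExc_eq_of_ladderSet_eq_image hf h,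
      Set.mem_Iic, Nat.lt_succ_iff, forall_prop_of_true finite_setOf_mem_ladderSet]
  have hmem : Set.ofPred (· ∈ ladderSet n w) = f '' Set.Iic k := by
    ext j
    simp [h]
  rw [ladderIdx_eq_nth]
  refine (Nat.eq_nth_of_strictMonoOn_of_mapsTo_of_surjOn f ?_ ?_ ?_ ?_).symm
  · rw [hdom, hmem]; exact Set.surjOn_image f _
  · rw [hdom, hmem]; exact Set.mapsTo_image f _
  · rwa [hdom]
  · exact hdom.ge hm

end Ladder

section Rearrangement

variable {n k : ℕ} {w : ℕ → ℝ}

theorem newEnd_zero (σ : Equiv.Perm (Fin k)) : newEnd n w k σ 0 = 0 := by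
  simp only [newEnd, Finset.range_zero, Finset.sum_empty]

theorem monotone_newEnd (σ : Equiv.Perm (Fin k)) : Monotone (newEnd n w k σ) :=
  fun _ _ h => Finset.sum_le_sum_of_subset (Finset.range_mono h)

theorem blockLen_eq (σ : Equiv.Perm (Fin k)) (m : Fin k) :
    blockLen n w k σ m = ladderIdx n w (σ m + 1) - ladderIdx n w (σ m) :=
  dif_pos m.isLt

theorem newEnd_succ_add_ladderIdx (hk : numExc n w = k) (σ : Equiv.Perm (Fin k)) (m : Fin k) :
    newEnd n w k σ (m + 1) + ladderIdx n w (σ m) =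
      newEnd n w k σ m + ladderIdx n w (σ m + 1) := by
  have hlt := ladderIdx_lt_ladderIdx_succ hk (σ m)
  rw [newEnd, Finset.sum_range_succ, ← newEnd, blockLen_eq]
  omega

theorem newEnd_one (hk : numExc n w = k) {m : ℕ} (hm : m ≤ k) :
    newEnd n w k 1 m = ladderIdx n w m := by
  induction m with
  | zero => rw [newEnd_zero, ladderIdx_zero]
  | succ m ih =>
    have hstep : newEnd n w k 1 (m + 1) + ladderIdx n w m =
        newEnd n w k 1 m + ladderIdx n w (m + 1) :=
      newEnd_succ_add_ladderIdx hk 1 ⟨m, hm⟩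
    have hprev := ih (by omega)
    omega

theorem newEnd_last (hk : numExc n w = k) (σ : Equiv.Perm (Fin k)) :
    newEnd n w k σ k = ladderIdx n w k := by
  have hsum (ρ : Equiv.Perm (Fin k)) : newEnd n w k ρ k =
      ∑ r, (ladderIdx n w (ρ r + 1) - ladderIdx n w (ρ r)) := by
    rw [newEnd, ← Fin.sum_univ_eq_sum_range]
    exact Finset.sum_congr rfl fun r _ => blockLen_eq ρ r
  rw [← newEnd_one hk le_rfl, hsum, hsum]
  exact Equiv.sum_comp σ fun r : Fin k => ladderIdx n w (r + 1) - ladderIdx n w r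

theorem newEnd_lt_newEnd_succ (hk : numExc n w = k) (σ : Equiv.Perm (Fin k)) (m : Fin k) :
    newEnd n w k σ m < newEnd n w k σ (m + 1) := by
  have hlt := ladderIdx_lt_ladderIdx_succ hk (σ m)
  have hstep := newEnd_succ_add_ladderIdx hk σ m
  omega

theorem strictMonoOn_newEnd (hk : numExc n w = k) (σ : Equiv.Perm (Fin k)) :
    StrictMonoOn (newEnd n w k σ) (Set.Iic k) := by
  intro a _ b hb hab
  exact (newEnd_lt_newEnd_succ hk σ ⟨a, hab.trans_le hb⟩).trans_le (monotone_newEnd σ hab)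

theorem exists_eq_newEnd_add (σ : Equiv.Perm (Fin k)) {p : ℕ} (hp₀ : 0 < p)
    (hp : p ≤ newEnd n w k σ k) :
    ∃ (m : Fin k) (i : ℕ), 0 < i ∧ newEnd n w k σ m + i ≤ newEnd n w k σ (m + 1) ∧
      p = newEnd n w k σ m + i := by
  obtain ⟨m, hm⟩ := exists_mem_Ioc_of_monotone (monotone_newEnd (n := n) (w := w) σ)
    ⟨(newEnd_zero σ).trans_lt hp₀, hp⟩
  obtain ⟨i, rfl⟩ := Nat.exists_eq_add_of_le hm.1.le
  exact ⟨m, i, Nat.pos_of_lt_add_right hm.1, hm.2, rfl⟩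

theorem excSource_newEnd_add (σ : Equiv.Perm (Fin k)) (m : Fin k) {i : ℕ} (hi₀ : 0 < i)
    (hi : newEnd n w k σ m + i ≤ newEnd n w k σ (m + 1)) :
    excSource n w k σ (newEnd n w k σ m + i) = ladderIdx n w (σ m) + i := by
  have hblock : sInf {r : ℕ | newEnd n w k σ m + i ≤ newEnd n w k σ (r + 1)} = m := by
    refine le_antisymm (Nat.sInf_le hi) (le_csInf ⟨m, hi⟩ fun r hr => ?_)
    by_contra! hrm
    have hmono : newEnd n w k σ (r + 1) ≤ newEnd n w k σ m := monotone_newEnd σ hrm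
    have : newEnd n w k σ m + i ≤ newEnd n w k σ (r + 1) := hr
    omega
  have hlast : newEnd n w k σ (m + 1) ≤ newEnd n w k σ k := monotone_newEnd σ m.isLt
  rw [excSource, if_pos ⟨by omega, hi.trans hlast⟩]
  simp only [hblock, Fin.is_lt, dite_true, Fin.eta, Nat.add_sub_cancel_left]

theorem excSource_of_newEnd_lt {σ : Equiv.Perm (Fin k)} {p : ℕ} (hp : newEnd n w k σ k < p) :
    excSource n w k σ p = p :=
  if_neg fun h => h.2.not_gt hp

theorem excSource_mem_Icc (hk : numExc n w = k) (σ : Equiv.Perm (Fin k)) {p : ℕ}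
    (hp : p ∈ Set.Icc 1 n) : excSource n w k σ p ∈ Set.Icc 1 n := by
  rcases le_or_gt p (newEnd n w k σ k) with hle | hlt
  · obtain ⟨m, i, hi₀, hi, rfl⟩ := exists_eq_newEnd_add σ hp.1 hle
    have hstep := newEnd_succ_add_ladderIdx hk σ m
    have hn : ladderIdx n w (σ m + 1) ≤ n := ladderIdx_le (by omega)
    rw [excSource_newEnd_add σ m hi₀ hi]
    constructor <;> omega
  · rwa [excSource_of_newEnd_lt hlt]

theorem permuteExc_zero (σ : Equiv.Perm (Fin k)) : permuteExc n k σ w 0 = 0 := by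
  simp [permuteExc]

theorem permuteExc_succ (σ : Equiv.Perm (Fin k)) (j : ℕ) :
    permuteExc n k σ w (j + 1) = permuteExc n k σ w j +
      (w (excSource n w k σ (j + 1)) - w (excSource n w k σ (j + 1) - 1)) := by
  rw [permuteExc, permuteExc, Finset.sum_Icc_succ_top (by omega)]

theorem permuteExc_add_of_excSource_eq {σ : Equiv.Perm (Fin k)} {a b i : ℕ}
    (h : ∀ l, 0 < l → l ≤ i → excSource n w k σ (a + l) = b + l) :
    permuteExc n k σ w (a + i) = permuteExc n k σ w a + (w (b + i) - w b) := by
  induction i with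
  | zero => simp
  | succ i ih =>
    have hlast : excSource n w k σ (a + i + 1) = b + i + 1 := h (i + 1) i.succ_pos le_rfl
    rw [← add_assoc, permuteExc_succ, ih fun l hl₀ hl => h l hl₀ (by omega), hlast,
      Nat.add_sub_cancel, add_assoc b i 1]
    ring

theorem permuteExc_newEnd_add (σ : Equiv.Perm (Fin k)) (m : Fin k) {i : ℕ}
    (hi : newEnd n w k σ m + i ≤ newEnd n w k σ (m + 1)) :
    permuteExc n k σ w (newEnd n w k σ m + i) = permuteExc n k σ w (newEnd n w k σ m) +
      (w (ladderIdx n w (σ m) + i) - w (ladderIdx n w (σ m))) :=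
  permuteExc_add_of_excSource_eq fun _ hl₀ hl => excSource_newEnd_add σ m hl₀ (by omega)

theorem permuteExc_newEnd_succ (hk : numExc n w = k) (σ : Equiv.Perm (Fin k)) (m : Fin k) :
    permuteExc n k σ w (newEnd n w k σ (m + 1)) = permuteExc n k σ w (newEnd n w k σ m) +
      (w (ladderIdx n w (σ m + 1)) - w (ladderIdx n w (σ m))) := by
  obtain ⟨i, hi⟩ := Nat.exists_eq_add_of_le (newEnd_lt_newEnd_succ hk σ m).le
  have hstep := newEnd_succ_add_ladderIdx hk σ m
  have hsource : ladderIdx n w (σ m) + i = ladderIdx n w (σ m + 1) := by omega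
  rw [hi, permuteExc_newEnd_add σ m hi.ge, hsource]

theorem permuteExc_newEnd_last_add (σ : Equiv.Perm (Fin k)) (i : ℕ) :
    permuteExc n k σ w (newEnd n w k σ k + i) = permuteExc n k σ w (newEnd n w k σ k) +
      (w (newEnd n w k σ k + i) - w (newEnd n w k σ k)) :=
  permuteExc_add_of_excSource_eq fun _ hl₀ _ => excSource_of_newEnd_lt (by omega)

theorem ladderSet_permuteExc (hk : numExc n w = k) (σ : Equiv.Perm (Fin k)) :
    ladderSet n (permuteExc n k σ w) = (Finset.range (k + 1)).image (newEnd n w k σ) := by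
  refine ladderSet_eq_image (monotone_newEnd σ) (newEnd_zero σ)
    ((newEnd_last hk σ).trans_le (ladderIdx_le hk.ge)) ?_ ?_ ?_
  · rintro m j ⟨hmj, hj⟩
    obtain ⟨i, rfl⟩ := Nat.exists_eq_add_of_le hmj
    have hstep := newEnd_succ_add_ladderIdx hk σ m
    have hmax : w (ladderIdx n w (σ m) + i) ≤ w (ladderIdx n w (σ m + 1)) :=
      apply_le_apply_ladderIdx (by omega) (by omega)
    rw [permuteExc_newEnd_add σ m hj, permuteExc_newEnd_succ hk]
    linarith
  · rintro m j ⟨hmj, hj⟩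
    obtain ⟨i, rfl⟩ := Nat.exists_eq_add_of_le hmj.le
    have hstep := newEnd_succ_add_ladderIdx hk σ m
    have hbelow : w (ladderIdx n w (σ m) + i) < w (ladderIdx n w (σ m)) :=
      apply_lt_apply_ladderIdx hk (σ m) ⟨by omega, by omega⟩
    rw [permuteExc_newEnd_add σ m hj.le]
    linarith
  · rintro j ⟨hkj, hj⟩
    obtain ⟨i, rfl⟩ := Nat.exists_eq_add_of_le hkj.le
    have hlast : newEnd n w k σ k = ladderIdx n w (numExc n w) := hk ▸ newEnd_last hk σ
    have hbelow : w (newEnd n w k σ k + i) < w (newEnd n w k σ k) := by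
      rw [hlast] at hkj hj ⊢
      exact apply_lt_apply_ladderIdx_numExc ⟨hkj, hj⟩
    rw [permuteExc_newEnd_last_add]
    linarith

theorem numExc_permuteExc (hk : numExc n w = k) (σ : Equiv.Perm (Fin k)) :
    numExc n (permuteExc n k σ w) = k :=
  numExc_eq_of_ladderSet_eq_image (strictMonoOn_newEnd hk σ) (ladderSet_permuteExc hk σ)

theorem ladderIdx_permuteExc (hk : numExc n w = k) (σ : Equiv.Perm (Fin k)) {m : ℕ} (hm : m ≤ k) :
    ladderIdx n (permuteExc n k σ w) m = newEnd n w k σ m :=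
  ladderIdx_eq_of_ladderSet_eq_image (strictMonoOn_newEnd hk σ) (ladderSet_permuteExc hk σ) hm

theorem newEnd_permuteExc_inv (hk : numExc n w = k) (σ : Equiv.Perm (Fin k)) {m : ℕ}
    (hm : m ≤ k) : newEnd n (permuteExc n k σ w) k σ⁻¹ m = ladderIdx n w m := by
  induction m with
  | zero => rw [newEnd_zero, ladderIdx_zero]
  | succ m ih =>
    have hback := newEnd_succ_add_ladderIdx (numExc_permuteExc hk σ) σ⁻¹ ⟨m, hm⟩
    have hstep := newEnd_succ_add_ladderIdx hk σ (σ⁻¹ ⟨m, hm⟩)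
    rw [ladderIdx_permuteExc hk σ (by omega), ladderIdx_permuteExc hk σ (by omega)] at hback
    simp only [Equiv.Perm.coe_inv, Equiv.apply_symm_apply] at hstep hback
    have hprev := ih (by omega)
    omega

theorem excSource_inv_excSource (hk : numExc n w = k) (σ : Equiv.Perm (Fin k)) {p : ℕ}
    (hp₀ : 0 < p) :
    excSource n (permuteExc n k σ w) k σ⁻¹ (excSource n w k σ p) = p := by
  rcases le_or_gt p (newEnd n w k σ k) with hp | hp
  · obtain ⟨m, i, hi₀, hi, rfl⟩ := exists_eq_newEnd_add σ hp₀ hp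
    have hstep := newEnd_succ_add_ladderIdx hk σ m
    have hstart : newEnd n (permuteExc n k σ w) k σ⁻¹ (σ m) = ladderIdx n w (σ m) :=
      newEnd_permuteExc_inv hk σ (by omega)
    have hend : newEnd n (permuteExc n k σ w) k σ⁻¹ (σ m + 1) = ladderIdx n w (σ m + 1) :=
      newEnd_permuteExc_inv hk σ (by omega)
    rw [excSource_newEnd_add σ m hi₀ hi, ← hstart,
      excSource_newEnd_add σ⁻¹ (σ m) hi₀ (by omega), Equiv.Perm.coe_inv, Equiv.symm_apply_apply,
      ladderIdx_permuteExc hk σ m.isLt.le]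
  · rw [excSource_of_newEnd_lt hp, excSource_of_newEnd_lt]
    rwa [newEnd_permuteExc_inv hk σ le_rfl, ← newEnd_last hk σ]

end Rearrangement

section Permutation

variable {n k : ℕ} {w : ℕ → ℝ}

/-- `excSource` as a self-map of the (0-based) index set `Fin n` of increments; the increment with
index `i` is the one at position `i + 1`. -/
def excSourceFin (hk : numExc n w = k) (σ : Equiv.Perm (Fin k)) (i : Fin n) : Fin n :=
  ⟨excSource n w k σ (i + 1) - 1, by
    obtain ⟨hpos, hle⟩ := excSource_mem_Icc hk σ (p := i + 1) ⟨by omega, i.isLt⟩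
    omega⟩

theorem excSourceFin_add_one (hk : numExc n w = k) (σ : Equiv.Perm (Fin k)) (i : Fin n) :
    (excSourceFin hk σ i : ℕ) + 1 = excSource n w k σ (i + 1) :=
  Nat.sub_add_cancel (excSource_mem_Icc hk σ (p := i + 1) ⟨by omega, i.isLt⟩).1

theorem excSourceFin_leftInverse (hk : numExc n w = k) (σ : Equiv.Perm (Fin k)) :
    Function.LeftInverse (excSourceFin (numExc_permuteExc hk σ) σ⁻¹) (excSourceFin hk σ) := by
  intro i
  apply Fin.ext
  apply Nat.succ_injective
  rw [Nat.succ_eq_add_one, excSourceFin_add_one, excSourceFin_add_one,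
    excSource_inv_excSource hk σ (Nat.succ_pos i)]

/-- The permutation of the increments of `w` that turns `w` into `permuteExc n k σ w`: the `i`-th
increment of the rearranged path is the `excPerm hk σ i`-th increment of `w`. -/
def excPerm (hk : numExc n w = k) (σ : Equiv.Perm (Fin k)) : Equiv.Perm (Fin n) :=
  Equiv.ofBijective (excSourceFin hk σ)
    (Finite.injective_iff_bijective.mp (excSourceFin_leftInverse hk σ).injective)

theorem excPerm_apply_add_one (hk : numExc n w = k) (σ : Equiv.Perm (Fin k)) (i : Fin n) :
    (excPerm hk σ i : ℕ) + 1 = excSource n w k σ (i + 1) :=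
  excSourceFin_add_one hk σ i

theorem excPerm_mul_excPerm_inv (hk : numExc n w = k) (σ : Equiv.Perm (Fin k)) :
    excPerm hk σ * excPerm (numExc_permuteExc hk σ) σ⁻¹ = 1 :=
  mul_eq_one_comm.mp (Equiv.ext (excSourceFin_leftInverse hk σ))

variable {x : Fin n → ℝ} {τ : Equiv.Perm (Fin n)}

theorem pathOf_succ (j : Fin n) : pathOf n x τ (j + 1) = pathOf n x τ j + x (τ j) := by
  have hinsert : Finset.univ.filter (fun i : Fin n => (i : ℕ) < j + 1) =
      insert j (Finset.univ.filter (fun i : Fin n => (i : ℕ) < j)) := by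
    ext i
    simp only [Finset.mem_filter, Finset.mem_univ, true_and, Finset.mem_insert, Fin.ext_iff]
    omega
  rw [pathOf, pathOf, hinsert, Finset.sum_insert (by simp), add_comm]

theorem pathOf_succ_of_le {j : ℕ} (hj : n ≤ j) : pathOf n x τ (j + 1) = pathOf n x τ j := by
  rw [pathOf, pathOf]
  congr 1
  ext i
  simp only [Finset.mem_filter, Finset.mem_univ, true_and]
  omega

theorem pathOf_mul_excPerm (hk : numExc n (pathOf n x τ) = k) (σ : Equiv.Perm (Fin k)) :
    pathOf n x (τ * excPerm hk σ) = permuteExc n k σ (pathOf n x τ) := by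
  funext j
  induction j with
  | zero => simp [permuteExc_zero, pathOf]
  | succ j ih =>
    rw [permuteExc_succ, ← ih]
    rcases lt_or_ge j n with hj | hj
    · have hsource := excPerm_apply_add_one hk σ ⟨j, hj⟩
      rw [pathOf_succ ⟨j, hj⟩, ← hsource, Nat.add_sub_cancel, pathOf_succ, Equiv.Perm.mul_apply]
      ring
    · have hlast : newEnd n (pathOf n x τ) k σ k ≤ n :=
        (newEnd_last hk σ).trans_le (ladderIdx_le hk.ge)
      rw [excSource_of_newEnd_lt (by omega), Nat.add_sub_cancel, pathOf_succ_of_le hj,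
        pathOf_succ_of_le hj, sub_self, add_zero]

/-- The map `φ` lifted from paths to permutations: `φ(x^τ) = x^(excRearrange x σs τ)`. -/
def excRearrange (x : Fin n → ℝ) (σs : ∀ k : ℕ, Equiv.Perm (Fin k)) (τ : Equiv.Perm (Fin n)) :
    Equiv.Perm (Fin n) :=
  τ * excPerm (w := pathOf n x τ) rfl (σs _)

theorem excRearrange_eq (σs : ∀ k : ℕ, Equiv.Perm (Fin k)) (hw : pathOf n x τ = w)
    (hk : numExc n w = k) : excRearrange x σs τ = τ * excPerm hk (σs k) := by
  subst hw hk
  rfl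

theorem pathOf_excRearrange (x : Fin n → ℝ) (σs : ∀ k : ℕ, Equiv.Perm (Fin k))
    (τ : Equiv.Perm (Fin n)) :
    pathOf n x (excRearrange x σs τ) =
      permuteExc n (numExc n (pathOf n x τ)) (σs (numExc n (pathOf n x τ))) (pathOf n x τ) :=
  pathOf_mul_excPerm rfl _

theorem excRearrange_leftInverse (x : Fin n → ℝ) (σs : ∀ k : ℕ, Equiv.Perm (Fin k)) :
    Function.LeftInverse (excRearrange x fun k => (σs k)⁻¹) (excRearrange x σs) := by
  intro τ
  rw [excRearrange_eq _ (pathOf_excRearrange x σs τ) (numExc_permuteExc rfl _), excRearrange,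
    mul_assoc, excPerm_mul_excPerm_inv, mul_one]

theorem excRearrange_bijective (x : Fin n → ℝ) (σs : ∀ k : ℕ, Equiv.Perm (Fin k)) :
    Function.Bijective (excRearrange x σs) :=
  Finite.injective_iff_bijective.mp (excRearrange_leftInverse x σs).injective

end Permutation

section UniformLaw

variable {Ω α : Type*} [MeasurableSpace Ω] [Fintype α] {P : Measure Ω} {X : Ω → α}

theorem measure_preimage_eq_sum_fibers [IsFiniteMeasure P]
    (hX : ∑ a, P (X ⁻¹' {a}) = P univ) (s : Finset α) :
    P (X ⁻¹' s) = ∑ a ∈ s, P (X ⁻¹' {a}) := by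
  -- Outer measure is only subadditive over the fibers, but the resulting upper bounds for `s` and
  -- its complement add up to `P univ`, which forces equality in both.
  have hle (t : Finset α) : P (X ⁻¹' t) ≤ ∑ a ∈ t, P (X ⁻¹' {a}) := by
    have hfibers : X ⁻¹' t = ⋃ a ∈ t, X ⁻¹' {a} := by ext; simp
    exact hfibers ▸ measure_biUnion_finset_le t _
  have hcover : P univ ≤ P (X ⁻¹' s) + P (X ⁻¹' (sᶜ : Finset α)) := by
    rw [Finset.coe_compl, preimage_compl, ← union_compl_self (X ⁻¹' (s : Set α))]
    exact measure_union_le _ _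
  have hfin : ∑ a ∈ sᶜ, P (X ⁻¹' {a}) ≠ ⊤ := ENNReal.sum_ne_top.mpr fun _ _ => measure_ne_top P _
  refine (hle s).antisymm ((ENNReal.add_le_add_iff_right hfin).mp ?_)
  calc ∑ a ∈ s, P (X ⁻¹' {a}) + ∑ a ∈ sᶜ, P (X ⁻¹' {a})
    _ = P univ := by rw [Finset.sum_add_sum_compl, hX]
    _ ≤ P (X ⁻¹' s) + P (X ⁻¹' (sᶜ : Finset α)) := hcover
    _ ≤ P (X ⁻¹' s) + ∑ a ∈ sᶜ, P (X ⁻¹' {a}) := by gcongr; exact hle sᶜ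

theorem measure_setOf_comp_of_uniform [IsProbabilityMeasure P]
    (hX : ∀ a, P {ω | X ω = a} = (Fintype.card α : ℝ≥0∞)⁻¹) {f : α → α}
    (hf : Function.Bijective f) (p : α → Prop) :
    P {ω | p (f (X ω))} = P {ω | p (X ω)} := by
  have : Nonempty α := (nonempty_of_isProbabilityMeasure P).map X
  have hfiber (a : α) : P (X ⁻¹' {a}) = (Fintype.card α : ℝ≥0∞)⁻¹ := hX a
  have hsum : ∑ a, P (X ⁻¹' {a}) = P univ := by
    simp [hfiber, ENNReal.mul_inv_cancel]
  have hcard (q : α → Prop) : P {ω | q (X ω)} =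
      (Finset.univ.filter q).card * (Fintype.card α : ℝ≥0∞)⁻¹ := by
    have h := measure_preimage_eq_sum_fibers hsum (Finset.univ.filter q)
    simpa [hfiber] using h
  rw [hcard p, hcard fun a => p (f a)]
  congr 2
  exact Finset.card_bijective f hf (by simp)

end UniformLaw

theorem stmt8_general
    {Ω : Type*} [MeasurableSpace Ω] (P : Measure Ω) [IsProbabilityMeasure P]
    (n : ℕ) (x : Fin n → ℝ) (π : Ω → Equiv.Perm (Fin n))
    (hπ : ∀ σ : Equiv.Perm (Fin n), P {ω | π ω = σ} = ((Nat.factorial n : ℝ≥0∞))⁻¹)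
    (σs : ∀ k : ℕ, Equiv.Perm (Fin k)) (v : ℕ → ℝ) :
    P {ω | permuteExc n (numExc n (pathOf n x (π ω))) (σs (numExc n (pathOf n x (π ω))))
            (pathOf n x (π ω)) = v} =
    P {ω | pathOf n x (π ω) = v} := by
  simp only [← pathOf_excRearrange]
  refine measure_setOf_comp_of_uniform (fun σ => ?_) (excRearrange_bijective x σs)
    fun τ => pathOf n x τ = v
  rw [hπ σ, Fintype.card_perm, Fintype.card_fin]

/-- if `x` has the different-subset-sum property, `π` is a uniform
permutation, `W = x^π`, and `φ` rearranges, on the event that `W` has exactly `k`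
complete excursions below its running maximum, the excursion blocks according to a
fixed permutation `σ_k` of `[k]`, then `φ(W)` has the same distribution as `W`. -/
theorem stmt8
    {Ω : Type*} [MeasurableSpace Ω] (P : Measure Ω) [IsProbabilityMeasure P]
    (n : ℕ) (x : Fin n → ℝ)
    -- different subset sums
    (hx : ∀ I J : Finset (Fin n), I ≠ J → ∑ i ∈ I, x i ≠ ∑ i ∈ J, x i)
    -- π is a uniform random permutation of [n]
    (π : Ω → Equiv.Perm (Fin n))
    (hπ : ∀ σ : Equiv.Perm (Fin n), P {ω | π ω = σ} = ((Nat.factorial n : ℝ≥0∞))⁻¹)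
    -- a deterministic permutation σs k of [k] for every k
    (σs : ∀ k : ℕ, Equiv.Perm (Fin k)) :
    ∀ v : ℕ → ℝ,
      P {ω | permuteExc n (numExc n (pathOf n x (π ω))) (σs (numExc n (pathOf n x (π ω))))
              (pathOf n x (π ω)) = v} =
      P {ω | pathOf n x (π ω) = v} :=
  stmt8_general P n x π hπ σs
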